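/- Let O be a Noetherian local ring with maximal ideal m and residue field k = O/m, such that O contains a field mapping isomorphically to k. Then the Hilbert–Samuel generating function Σ_{i≥0} dim_k(O/m^{i+1}) T^i is a rational function of the form Q(T)/(1−T)^d for some polynomial Q ∈ ℤ[T] and some integer d ≥ 0 (d = dim O), and Q(1) is a positive integer (the multiplicity e_m(O)). -/

import Mathlib

open PowerSeries

/-- Multiplication by `f` identifies `B / (B ∩ f⁻¹ A)` with `(A + f B) / A`; this is the
resulting count of dimensions. -/
theorem finrank_quotient_inf_comap_add {k R V W : Type*} [Field k] [CommRing R] [Algebra k R]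
    [AddCommGroup V] [Module k V] [Module R V] [IsScalarTower k R V]
    [AddCommGroup W] [Module k W] [Module R W] [IsScalarTower k R W]
    (f : V →ₗ[R] W) (B : Submodule R V) (A : Submodule R W)
    [Module.Finite k (V ⧸ (B ⊓ A.comap f))] [Module.Finite k (W ⧸ A)] :
    Module.finrank k (V ⧸ (B ⊓ A.comap f)) + Module.finrank k (W ⧸ (A ⊔ B.map f)) =
      Module.finrank k (V ⧸ B) + Module.finrank k (W ⧸ A) := by
  let g : (V ⧸ (B ⊓ A.comap f)) →ₗ[R] (W ⧸ A) := Submodule.mapQ _ _ f inf_le_right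
  have h1 := Submodule.finrank_quotient_add_finrank
    ((B.map (B ⊓ A.comap f).mkQ).restrictScalars k)
  have h2 := Submodule.finrank_quotient_add_finrank
    (((A ⊔ B.map f).map A.mkQ).restrictScalars k)
  rw [(Submodule.Quotient.restrictScalarsEquiv k _).finrank_eq,
    ((Submodule.quotientQuotientEquivQuotient _ _ inf_le_left).restrictScalars k).finrank_eq] at h1
  rw [(Submodule.Quotient.restrictScalarsEquiv k _).finrank_eq,
    ((Submodule.quotientQuotientEquivQuotient _ _ le_sup_left).restrictScalars k).finrank_eq] at h2
  have h3 : (A ⊔ B.map f).map A.mkQ = (B.map (B ⊓ A.comap f).mkQ).map g := by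
    rw [Submodule.map_sup, Submodule.mkQ_map_self, bot_sup_eq, ← Submodule.map_comp,
      ← Submodule.map_comp]
    rfl
  have h4 : Module.finrank k (((B.map (B ⊓ A.comap f).mkQ).map g).restrictScalars k) =
      Module.finrank k ((B.map (B ⊓ A.comap f).mkQ).restrictScalars k) := by
    have hinj : Function.Injective ((g.restrictScalars k).domRestrict
        ((B.map (B ⊓ A.comap f).mkQ).restrictScalars k)) := by
      rw [← LinearMap.ker_eq_bot, LinearMap.ker_eq_bot']
      rintro ⟨_, b, hb, rfl⟩ h
      have h' : f b ∈ A := (Submodule.Quotient.mk_eq_zero A).1 h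
      exact Subtype.ext ((Submodule.Quotient.mk_eq_zero _).2 ⟨hb, h'⟩)
    rw [← LinearMap.finrank_range_of_inj hinj, LinearMap.range_domRestrict]
    rfl
  rw [h3, h4] at h2
  omega

theorem coeff_succ_mul_one_sub_X (F : PowerSeries ℤ) (n : ℕ) :
    coeff (n + 1) (F * (1 - X)) = coeff (n + 1) F - coeff n F := by
  simp [mul_sub, coeff_succ_mul_X]

/-- A power series `Q / (1 - X) ^ (d + 1)` with `Q(1) < 0` has eventually negative
coefficients. -/
theorem coeff_eventually_neg {d : ℕ} {F : PowerSeries ℤ} {Q : Polynomial ℤ}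
    (h : F * (1 - X) ^ (d + 1) = (Q : PowerSeries ℤ)) (hQ : Q.eval 1 < 0) :
    ∃ N, ∀ n ≥ N, coeff n F < 0 := by
  induction d generalizing F with
  | zero =>
    have key : ∀ n, ∑ i ∈ Finset.range (n + 1), coeff i (F * (1 - X)) = coeff n F := by
      intro n
      induction n with
      | zero => simp [mul_sub]
      | succ n ih => rw [Finset.sum_range_succ, ih, coeff_succ_mul_one_sub_X]; ring
    refine ⟨Q.natDegree, fun n hn => ?_⟩
    rw [← key n]
    rw [zero_add, pow_one] at h
    simp only [h, Polynomial.coeff_coe]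
    rw [Polynomial.eval_eq_sum_range' (n := n + 1) (by omega)] at hQ
    simpa using hQ
  | succ d ih =>
    obtain ⟨N, hN⟩ := ih (F := F * (1 - X)) (by rw [← h]; ring)
    have hle : ∀ j : ℕ, coeff (N + j) F ≤ coeff N F - j := by
      intro j
      induction j with
      | zero => simp
      | succ j ih =>
        have := hN (N + j + 1) (by omega)
        rw [coeff_succ_mul_one_sub_X] at this
        rw [← add_assoc]
        push_cast
        omega
    refine ⟨N + ((coeff N F).toNat + 1), fun n hn => ?_⟩
    obtain ⟨j, rfl⟩ : ∃ j, n = N + j := ⟨n - N, by omega⟩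
    have := hle j
    omega

/-- A nonnegative power series with positive constant coefficient which is of the form
`Q / (1 - X) ^ n` can be written in this form with `Q(1) > 0`. -/
theorem exists_eval_one_pos {F : PowerSeries ℤ} (hF : ∀ n, 0 ≤ coeff n F)
    (hF0 : 0 < coeff 0 F)
    (h : ∃ (n : ℕ) (Q : Polynomial ℤ), F * (1 - X) ^ n = (Q : PowerSeries ℤ)) :
    ∃ (n : ℕ) (Q : Polynomial ℤ), F * (1 - X) ^ n = (Q : PowerSeries ℤ) ∧ 0 < Q.eval 1 := by
  classical
  obtain ⟨Q, hQ⟩ := Nat.find_spec h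
  refine ⟨Nat.find h, Q, hQ, ?_⟩
  rcases hd : Nat.find h with _ | d
  · rw [hd, pow_zero, mul_one] at hQ
    simp only [hQ, Polynomial.coeff_coe] at hF hF0
    rw [Polynomial.eval_eq_sum_range, Finset.sum_range_succ']
    have := Finset.sum_nonneg (s := Finset.range Q.natDegree) fun i _ => hF (i + 1)
    simp only [one_pow, mul_one]
    omega
  · rw [hd] at hQ
    rcases lt_trichotomy (Q.eval 1) 0 with hneg | hzero | hpos
    · obtain ⟨N, hN⟩ := coeff_eventually_neg hQ hneg
      exact absurd (hF N) (not_le.2 (hN N le_rfl))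
    · exfalso
      obtain ⟨P, rfl⟩ := Polynomial.dvd_iff_isRoot.2 hzero
      refine Nat.find_min h (m := d) (by omega) ⟨-P, ?_⟩
      have hX : (1 - X : PowerSeries ℤ) ≠ 0 := fun h0 => by
        simpa using congrArg (coeff 0) h0
      apply mul_right_cancel₀ hX
      rw [mul_assoc, ← pow_succ, hQ]
      simp
      ring
    · exact hpos

/-- A family of ideals, seen as the components of a graded module, is stable under multiplication
by the elements of `l`, each placed in degree one. -/
def IsStableUnder {O : Type*} [CommRing O] (l : List O) (N : ℕ → Ideal O) : Prop :=
  ∀ x ∈ l, ∀ i, ∀ a ∈ N i, x * a ∈ N (i + 1)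

/-- The Hilbert–Serre theorem for the graded module `⨁ i, B i / A i` over the polynomial ring
whose variables act through the elements of `l`. -/
theorem hilbert_serre_of_ideals {O k : Type*} [CommRing O] [Field k] [Algebra k O]
    (l : List O) (A B : ℕ → Ideal O) (hAB : A ≤ B)
    (hA : IsStableUnder l A) (hB : IsStableUnder l B)
    (hfin : ∀ i, Module.Finite k (O ⧸ A i))
    (hacc : ∀ f : ℕ → ℕ → Ideal O, Monotone f →
      (∀ n, A ≤ f n ∧ f n ≤ B ∧ IsStableUnder l (f n)) → ∃ n, ∀ m ≥ n, f m = f n) :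
    ∃ Q : Polynomial ℤ,
      (PowerSeries.mk fun i =>
        (Module.finrank k (O ⧸ A i) : ℤ) - Module.finrank k (O ⧸ B i)) * (1 - X) ^ l.length =
      (Q : PowerSeries ℤ) := by
  induction l generalizing A B with
  | nil =>
    obtain ⟨n, hn⟩ := hacc (fun n i => if i < n then B i else A i)
      (by
        intro m n hmn i
        dsimp only
        split_ifs with h1 h2
        · exact le_rfl
        · omega
        · exact hAB i
        · exact le_rfl)
      (by
        refine fun n => ⟨fun i => ?_, fun i => ?_, by simp [IsStableUnder]⟩
        · dsimp only
          split_ifs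
          exacts [hAB i, le_rfl]
        · dsimp only
          split_ifs
          exacts [le_rfl, hAB i])
    have heq : ∀ i, n ≤ i → B i = A i := by
      intro i hi
      have := congrFun (hn (i + 1) (by omega)) i
      simpa [not_lt.2 hi] using this
    refine ⟨PowerSeries.trunc n (PowerSeries.mk fun i =>
        (Module.finrank k (O ⧸ A i) : ℤ) - Module.finrank k (O ⧸ B i)), ?_⟩
    ext i
    rw [List.length_nil, pow_zero, mul_one, Polynomial.coeff_coe, coeff_trunc, coeff_mk]
    split_ifs with hi
    · rfl
    · rw [heq i (not_lt.1 hi), sub_self]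
  | cons x l ih =>
    let K : ℕ → Ideal O := fun i => B i ⊓ Submodule.comap (LinearMap.mulLeft O x) (A (i + 1))
    let C : ℕ → Ideal O := fun i => match i with
      | 0 => A 0
      | i + 1 => A (i + 1) ⊔ Submodule.map (LinearMap.mulLeft O x) (B i)
    have hAK : A ≤ K := fun i => le_inf (hAB i) fun a ha => hA x (by simp) i a ha
    have hKB : K ≤ B := fun i => inf_le_left
    have hAC : A ≤ C := by
      rintro (_ | i)
      · exact le_rfl
      · exact le_sup_left
    have hCB : C ≤ B := by
      rintro (_ | i)
      · exact hAB 0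
      · refine sup_le (hAB _) ?_
        rintro _ ⟨b, hb, rfl⟩
        exact hB x (by simp) i b hb
    have hxC : ∀ i, ∀ b ∈ B i, x * b ∈ C (i + 1) := fun i b hb =>
      Submodule.mem_sup_right ⟨b, hb, rfl⟩
    have hA' : IsStableUnder l A := fun y hy => hA y (by simp [hy])
    have hB' : IsStableUnder l B := fun y hy => hB y (by simp [hy])
    have hK : IsStableUnder l K := by
      rintro y hy i a ⟨ha, ha'⟩
      refine ⟨hB' y hy i a ha, ?_⟩
      have := hA' y hy (i + 1) _ ha'
      simpa [mul_left_comm] using this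
    have hC : IsStableUnder l C := by
      rintro y hy (_ | i) a ha
      · exact hAC 1 (hA' y hy 0 a ha)
      · obtain ⟨a', ha', _, ⟨b, hb, rfl⟩, rfl⟩ := Submodule.mem_sup.1 ha
        rw [mul_add]
        refine add_mem (hAC _ (hA' y hy _ _ ha')) ?_
        have := hxC (i + 1) _ (hB' y hy i b hb)
        simpa [mul_left_comm] using this
    have hfinK : ∀ i, Module.Finite k (O ⧸ K i) := fun i =>
      Module.Finite.of_surjective ((Submodule.factor (hAK i)).restrictScalars k)
        (Submodule.factor_surjective (hAK i))
    have hfinC : ∀ i, Module.Finite k (O ⧸ C i) := fun i =>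
      Module.Finite.of_surjective ((Submodule.factor (hAC i)).restrictScalars k)
        (Submodule.factor_surjective (hAC i))
    obtain ⟨P, hP⟩ := ih A K hAK hA' hK hfin fun f hf h => hacc f hf fun n => by
      refine ⟨(h n).1, (h n).2.1.trans hKB, fun y hy i a ha => ?_⟩
      rcases List.mem_cons.1 hy with rfl | hy
      · exact (h n).1 _ ((h n).2.1 i ha).2
      · exact (h n).2.2 y hy i a ha
    obtain ⟨R, hR⟩ := ih C B hCB hC hB' hfinC fun f hf h => hacc f hf fun n => by
      refine ⟨hAC.trans (h n).1, (h n).2.1, fun y hy i a ha => ?_⟩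
      rcases List.mem_cons.1 hy with rfl | hy
      · exact (h n).1 _ (hxC i a ((h n).2.1 i ha))
      · exact (h n).2.2 y hy i a ha
    refine ⟨R - Polynomial.X * P, ?_⟩
    rw [Polynomial.coe_sub, Polynomial.coe_mul, Polynomial.coe_X, ← hP, ← hR, List.length_cons,
      pow_succ', ← mul_assoc, ← mul_assoc, ← sub_mul]
    congr 1
    ext i
    rcases i with _ | i
    · simp [mul_sub, C]
    · rw [coeff_succ_mul_one_sub_X, map_sub, coeff_succ_X_mul]
      simp only [coeff_mk]
      have := hfinK i
      have := hfin (i + 1)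
      have hdim : Module.finrank k (O ⧸ K i) + Module.finrank k (O ⧸ C (i + 1)) =
          Module.finrank k (O ⧸ B i) + Module.finrank k (O ⧸ A (i + 1)) :=
        finrank_quotient_inf_comap_add (LinearMap.mulLeft O x) (B i) (A (i + 1))
      omega

theorem IsStableUnder.pow_mul_mem {O : Type*} [CommRing O] {l : List O} {N : ℕ → Ideal O}
    (hN : IsStableUnder l N) (s t : ℕ) {a b : O} (ha : a ∈ Ideal.span {x | x ∈ l} ^ s)
    (hb : b ∈ N t) : a * b ∈ N (s + t) := by
  have h1 : ∀ t, Ideal.span {x | x ∈ l} * N t ≤ N (t + 1) := fun t => by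
    rw [Ideal.mul_le]
    intro r hr c hc
    induction hr using Submodule.span_induction with
    | mem x hx => exact hN x hx t c hc
    | zero => simp
    | add x y _ _ hx hy => rw [add_mul]; exact add_mem hx hy
    | smul r x _ hx => rw [smul_mul_assoc]; exact Submodule.smul_mem _ _ hx
  have h2 : ∀ s, Ideal.span {x | x ∈ l} ^ s * N t ≤ N (s + t) := fun s => by
    induction s with
    | zero => simp
    | succ s ih =>
      rw [pow_succ', mul_assoc, add_right_comm]
      exact (Ideal.mul_mono_right ih).trans (h1 _)
  exact h2 s (Ideal.mul_mem_mul ha hb)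

/-- The ideal of the Rees algebra whose homogeneous components are the `N i`. -/
def reesIdeal {O : Type*} [CommRing O] (l : List O) (N : ℕ → Ideal O) (hN : IsStableUnder l N) :
    Ideal (reesAlgebra (Ideal.span {x | x ∈ l})) where
  carrier := {p | ∀ i, (p : Polynomial O).coeff i ∈ N i}
  add_mem' hp hq i := by simpa using add_mem (hp i) (hq i)
  zero_mem' i := by simp
  smul_mem' p q hq i := by
    rw [smul_eq_mul, Subalgebra.coe_mul, Polynomial.coeff_mul]
    refine sum_mem fun ⟨s, t⟩ hst => ?_
    rw [← Finset.HasAntidiagonal.mem_antidiagonal.1 hst]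
    exact hN.pow_mul_mem s t ((mem_reesAlgebra_iff _ _).1 p.2 s) (hq t)

theorem stabilizes_of_isStableUnder {O : Type*} [CommRing O] [IsNoetherianRing O] (l : List O)
    (f : ℕ → ℕ → Ideal O) (hf : Monotone f)
    (hle : ∀ n i, f n i ≤ Ideal.span {x | x ∈ l} ^ i) (hst : ∀ n, IsStableUnder l (f n)) :
    ∃ n, ∀ m ≥ n, f m = f n := by
  obtain ⟨n, hn⟩ := monotone_stabilizes_iff_noetherian.2
    (inferInstance : IsNoetherianRing (reesAlgebra (Ideal.span {x | x ∈ l})))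
    ⟨fun n => reesIdeal l (f n) (hst n), fun m n hmn p hp i => hf hmn i (hp i)⟩
  refine ⟨n, fun m hm => le_antisymm (fun i a ha => ?_) (hf hm)⟩
  have hmem : (⟨Polynomial.monomial i a, reesAlgebra.monomial_mem.2 (hle m i ha)⟩ :
      reesAlgebra (Ideal.span {x | x ∈ l})) ∈ reesIdeal l (f m) (hst m) := by
    intro j
    rw [Polynomial.coeff_monomial]
    split_ifs with h
    · exact h ▸ ha
    · exact zero_mem _
  have heq : reesIdeal l (f n) (hst n) = reesIdeal l (f m) (hst m) := hn m hm
  rw [← heq] at hmem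
  simpa using hmem i

theorem finite_quotient_maximalIdeal_pow {O k : Type*} [CommRing O] [Field k] [Algebra k O]
    [IsNoetherianRing O] [IsLocalRing O]
    (hres : Function.Surjective ((IsLocalRing.residue O).comp (algebraMap k O))) (n : ℕ) :
    Module.Finite k (O ⧸ IsLocalRing.maximalIdeal O ^ n) := by
  classical
  obtain ⟨S, hS⟩ := (IsNoetherian.noetherian (IsLocalRing.maximalIdeal O) :
    (IsLocalRing.maximalIdeal O).FG)
  have hconst : ∀ a : O, ∃ c : k, a - algebraMap k O c ∈ IsLocalRing.maximalIdeal O := fun a => by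
    obtain ⟨c, hc⟩ := hres (IsLocalRing.residue O a)
    exact ⟨c, by rw [← Ideal.Quotient.eq]; exact hc.symm⟩
  obtain ⟨F, hF, hFn⟩ : ∃ F : Submodule k O, F.FG ∧
      F ⊔ (IsLocalRing.maximalIdeal O ^ n).restrictScalars k = ⊤ := by
    induction n with
    | zero => exact ⟨⊥, Submodule.fg_bot, by simp [Ideal.one_eq_top]⟩
    | succ n ih =>
      obtain ⟨F, hF, hFn⟩ := ih
      refine ⟨Submodule.span k {1} ⊔ ⨆ x ∈ S, F.map (LinearMap.mulLeft k x),
        (Submodule.fg_span_singleton 1).sup (Submodule.fg_biSup _ _ fun x _ => hF.map _), ?_⟩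
      set G := (Submodule.span k {(1 : O)} ⊔ ⨆ x ∈ S, F.map (LinearMap.mulLeft k x)) ⊔
        (IsLocalRing.maximalIdeal O ^ (n + 1)).restrictScalars k with hG
      have hmul : ∀ x ∈ S, ∀ a : O, x * a ∈ G := by
        intro x hx a
        obtain ⟨b, hb, c, hc, rfl⟩ := Submodule.mem_sup.1 (hFn ▸ Submodule.mem_top (x := a))
        rw [mul_add]
        refine add_mem (Submodule.mem_sup_left (Submodule.mem_sup_right ?_))
          (Submodule.mem_sup_right ?_)
        · exact Submodule.mem_iSup_of_mem x (Submodule.mem_iSup_of_mem hx ⟨b, hb, rfl⟩)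
        · rw [Submodule.restrictScalars_mem, pow_succ']
          exact Ideal.mul_mem_mul (hS ▸ Ideal.subset_span hx) hc
      have hmax : ∀ a ∈ IsLocalRing.maximalIdeal O, a ∈ G := by
        intro a ha
        rw [← hS] at ha
        obtain ⟨g, -, rfl⟩ := Submodule.mem_span_finset.1 ha
        exact sum_mem fun x hx => by rw [smul_eq_mul, mul_comm]; exact hmul x hx _
      rw [eq_top_iff]
      intro a _
      obtain ⟨c, hc⟩ := hconst a
      rw [← sub_add_cancel a (algebraMap k O c)]
      refine add_mem (hmax _ hc) (Submodule.mem_sup_left (Submodule.mem_sup_left ?_))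
      rw [Algebra.algebraMap_eq_smul_one]
      exact Submodule.smul_mem _ _ (Submodule.mem_span_singleton_self 1)
  have := Module.Finite.iff_fg.2 hF
  refine Module.Finite.of_surjective
    (((IsLocalRing.maximalIdeal O ^ n).mkQ.restrictScalars k).domRestrict F) fun q => ?_
  obtain ⟨a, rfl⟩ := Submodule.mkQ_surjective _ q
  obtain ⟨b, hb, c, hc, rfl⟩ := Submodule.mem_sup.1 (hFn ▸ Submodule.mem_top (x := a))
  refine ⟨⟨b, hb⟩, ?_⟩
  have hc' : (IsLocalRing.maximalIdeal O ^ n).mkQ c = 0 :=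
    (Submodule.Quotient.mk_eq_zero _).2 hc
  rw [map_add, hc', add_zero]
  rfl

/-- Let `O` be a Noetherian local ring with maximal ideal `m` and residue field
`k = O/m`, containing a field mapping isomorphically onto `k`.  Then the
Hilbert–Samuel generating function `Σ_{i≥0} dim_k(O/m^{i+1}) Tⁱ` is a rational
function of the form `Q(T)/(1−T)^d` for some polynomial `Q ∈ ℤ[T]` and some
integer `d ≥ 0` (determined by the dimension of `O`), and `Q(1)` is a positive
integer (the multiplicity `e_m(O)`). -/
theorem hilbert_samuel_series_rational (O k : Type*) [CommRing O] [Field k]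
    [Algebra k O] [IsNoetherianRing O] [IsLocalRing O]
    (hres : Function.Bijective
      ((IsLocalRing.residue O).comp (algebraMap k O))) :
    ∃ (d : ℕ) (Q : Polynomial ℤ),
      (PowerSeries.mk fun i =>
          (Module.finrank k (O ⧸ (IsLocalRing.maximalIdeal O) ^ (i + 1)) : ℤ)) *
          (1 - PowerSeries.X) ^ d = (Q : PowerSeries ℤ) ∧
      0 < Q.eval 1 := by
  have hfin := finite_quotient_maximalIdeal_pow hres.2
  refine exists_eval_one_pos (fun n => by simp) ?_ ?_
  · rw [coeff_mk]
    have := hfin (0 + 1)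
    have : Nontrivial (O ⧸ IsLocalRing.maximalIdeal O ^ (0 + 1)) := by
      rw [zero_add, pow_one]
      infer_instance
    exact_mod_cast Module.finrank_pos
  obtain ⟨S, hS⟩ := (IsNoetherian.noetherian (IsLocalRing.maximalIdeal O) :
    (IsLocalRing.maximalIdeal O).FG)
  have hspan : Ideal.span {x | x ∈ S.toList} = IsLocalRing.maximalIdeal O := by
    simpa using hS
  have hmem : ∀ x ∈ S.toList, x ∈ IsLocalRing.maximalIdeal O := fun x hx =>
    hspan ▸ Ideal.subset_span hx
  obtain ⟨Q, hQ⟩ := hilbert_serre_of_ideals (k := k) S.toList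
    (fun i => IsLocalRing.maximalIdeal O ^ (i + 1)) (fun i => IsLocalRing.maximalIdeal O ^ i)
    (fun i => Ideal.pow_le_pow_right (Nat.le_succ i))
    (fun x hx i a ha => by
      dsimp only
      rw [pow_succ']
      exact Ideal.mul_mem_mul (hmem x hx) ha)
    (fun x hx i a ha => by
      dsimp only
      rw [pow_succ']
      exact Ideal.mul_mem_mul (hmem x hx) ha)
    (fun i => hfin (i + 1))
    (fun f hf h => stabilizes_of_isStableUnder S.toList f hf
      (fun n i => by rw [hspan]; exact (h n).2.1 i) fun n => (h n).2.2)
  refine ⟨S.toList.length + 1, Q, ?_⟩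
  rw [← hQ, pow_succ', ← mul_assoc]
  congr 1
  ext i
  rcases i with _ | i
  · have : Subsingleton (O ⧸ IsLocalRing.maximalIdeal O ^ 0) := by
      rw [pow_zero, Ideal.one_eq_top]
      infer_instance
    simp [mul_sub, Module.finrank_zero_of_subsingleton]
  · rw [coeff_succ_mul_one_sub_X]
    simp
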